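/- Let m = 2k with k ≥ 3, and let u ∈ (ZMod 2)^m be a signature satisfying u_{i+k} ≠ u_i for all 0 ≤ i ≤ k−1. Let a be the arc of the Walecki tournament W_u between the vertices 0 and m. Then d(a) = 1, and consequently every automorphism of W_u fixes the vertex *, and any isomorphism from W_u to another Walecki tournament W_v maps the vertex * of W_u to the vertex * of W_v. -/

import Mathlib

/-- Vertex set of the Walecki tournament on `2*m+1` vertices:
`ZMod (2*m)` together with the extra vertex `*`, encoded as `none`. -/
abbrev WVert (m : ℕ) := Option (ZMod (2 * m))

/-- The arc relation of the directed Hamilton cycle `C_j⁺`: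
it has arcs `(*, j)` and `(j+m, *)`, together with the arcs `(j−k, j+k+1)` for
`0 ≤ k ≤ m−1` and `(j+k, j−k)` for `1 ≤ k ≤ m−1` (arithmetic in `ZMod (2*m)`). -/
def Cplus (m : ℕ) (j : ZMod (2 * m)) (x y : WVert m) : Prop :=
  (x = none ∧ y = some j) ∨
  (x = some (j + (m : ZMod (2 * m))) ∧ y = none) ∨
  (∃ k : ℕ, k ≤ m - 1 ∧ x = some (j - (k : ZMod (2 * m))) ∧
    y = some (j + (k : ZMod (2 * m)) + 1)) ∨
  (∃ k : ℕ, 1 ≤ k ∧ k ≤ m - 1 ∧ x = some (j + (k : ZMod (2 * m))) ∧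
    y = some (j - (k : ZMod (2 * m))))

/-- The arc relation of the Walecki tournament `W_u` with signature `u ∈ (ZMod 2)^m`:
the arcs of `C_j⁺` when `u_j = 1`, and the arcs of `C_j⁻` (the reverse of `C_j⁺`)
when `u_j = 0`, for `0 ≤ j ≤ m−1`. -/
def warc (m : ℕ) (u : Fin m → ZMod 2) (x y : WVert m) : Prop :=
  ∃ j : Fin m, (u j = 1 ∧ Cplus m ((j : ℕ) : ZMod (2 * m)) x y) ∨
               (u j = 0 ∧ Cplus m ((j : ℕ) : ZMod (2 * m)) y x)

/-- `d(a)` for the arc `a = (x,y)`: the number of vertices `z ≠ x, y` such that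
`(y,z)` and `(z,x)` are both arcs, i.e. `x, y, z` span a directed triangle. -/
noncomputable def dcount {α : Type*} (arc : α → α → Prop) (x y : α) : ℕ :=
  {z : α | z ≠ x ∧ z ≠ y ∧ arc y z ∧ arc z x}.ncard

/-- `i(a)` for the arc `a = (x,y)`: the number of vertices `z ≠ x, y` with arcs
`(z,x)` and `(z,y)`. -/
noncomputable def icount {α : Type*} (arc : α → α → Prop) (x y : α) : ℕ :=
  {z : α | z ≠ x ∧ z ≠ y ∧ arc z x ∧ arc z y}.ncard

/-- `o(a)` for the arc `a = (x,y)`: the number of vertices `z ≠ x, y` with arcs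
`(x,z)` and `(y,z)`. -/
noncomputable def ocount {α : Type*} (arc : α → α → Prop) (x y : α) : ℕ :=
  {z : α | z ≠ x ∧ z ≠ y ∧ arc x z ∧ arc y z}.ncard

/-- `b(a)` for the arc `a = (x,y)`: the number of vertices `z ≠ x, y` with arcs
`(x,z)` and `(z,y)`. -/
noncomputable def bcount {α : Type*} (arc : α → α → Prop) (x y : α) : ℕ :=
  {z : α | z ≠ x ∧ z ≠ y ∧ arc x z ∧ arc z y}.ncard

/-- Two elements of `ZMod (2*m)` have the same parity if their difference is
twice an element of `ZMod (2*m)`. -/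
def sameParity (m : ℕ) (x y : ZMod (2 * m)) : Prop :=
  ∃ c : ZMod (2 * m), x - y = 2 * c

/-- Three distinct vertices `x, y, z` induce a directed triangle:
the three arcs among them form a directed 3-cycle. -/
def dirTri {α : Type*} (arc : α → α → Prop) (x y z : α) : Prop :=
  x ≠ y ∧ y ≠ z ∧ x ≠ z ∧
    ((arc x y ∧ arc y z ∧ arc z x) ∨ (arc x z ∧ arc z y ∧ arc y x))

/-- The all-ones signature `1_m`. -/
def onesSig (m : ℕ) : Fin m → ZMod 2 := fun _ => 1

/-- The complementing register shift `R_1`: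
`uR_1 = (1 − u_{m−1}, u_0, u_1, …, u_{m−2})`. -/
def shift1 (m : ℕ) (u : Fin m → ZMod 2) : Fin m → ZMod 2 := fun i =>
  if (i : ℕ) = 0 then 1 - u ⟨m - 1, Nat.sub_lt i.pos Nat.one_pos⟩
  else u ⟨(i : ℕ) - 1, lt_of_le_of_lt (Nat.sub_le _ _) i.isLt⟩

/-- The inverse of the complementing register shift `R_1`:
`(uR_1⁻¹)_i = u_{i+1}` for `i < m−1` and `(uR_1⁻¹)_{m−1} = 1 − u_0`. -/
def unshift1 (m : ℕ) (u : Fin m → ZMod 2) : Fin m → ZMod 2 := fun i =>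
  if h : (i : ℕ) = m - 1 then 1 - u ⟨0, i.pos⟩
  else u ⟨(i : ℕ) + 1, by have h1 := i.isLt; omega⟩

/-- `R_t` for an integer `t`: the `t`-th iterate of the complementing register
shift `R_1` (inverse iterates when `t` is negative). `Rshift m t u = u R_t`. -/
def Rshift (m : ℕ) (t : ℤ) (u : Fin m → ZMod 2) : Fin m → ZMod 2 :=
  if 0 ≤ t then (shift1 m)^[t.toNat] u else (unshift1 m)^[(-t).toNat] u

/-- The permutation `σ = (0 1 2 ⋯ m−1)(n−1 n−2 ⋯ m)` of the vertex set:
it fixes `*`, maps `k ↦ k+1` for `0 ≤ k ≤ m−2`, `m−1 ↦ 0`,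
`k ↦ k−1` for `m+1 ≤ k ≤ n−1`, and `m ↦ n−1`. -/
def sigmaFun (m : ℕ) : WVert m → WVert m
  | none => none
  | some x =>
      if x.val < m then some ((((x.val + 1) % m : ℕ)) : ZMod (2 * m))
      else some (((m + (x.val - m + (m - 1)) % m : ℕ)) : ZMod (2 * m))

/-- The inverse of the permutation `σ`. -/
def sigmaInvFun (m : ℕ) : WVert m → WVert m
  | none => none
  | some x =>
      if x.val < m then some ((((x.val + (m - 1)) % m : ℕ)) : ZMod (2 * m))
      else some (((m + (x.val - m + 1) % m : ℕ)) : ZMod (2 * m))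

/-- `σ^t` for an integer `t`: the `t`-th iterate of `σ`
(inverse iterates when `t` is negative). -/
def sigmaZ (m : ℕ) (t : ℤ) : WVert m → WVert m :=
  if 0 ≤ t then (sigmaFun m)^[t.toNat] else (sigmaInvFun m)^[(-t).toNat]

/-- The antiperiodic extension of a signature to all integers. -/
noncomputable def extSig (m : ℕ) (u : Fin m → ZMod 2) (j : ℤ) : Bool :=
  open Classical in
  decide (∃ i : Fin m, (u i = 1 ∧ ((2 * m : ℕ) : ℤ) ∣ j - (i : ℕ)) ∨
    (u i = 0 ∧ ((2 * m : ℕ) : ℤ) ∣ j - m - (i : ℕ)))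

/-- Two integers congruent mod `2m` and close to each other are equal. -/
lemma wal_close {N : ℤ} {a : ℤ} (h : N ∣ a) (h1 : -N < a) (h2 : a < N) : a = 0 := by
  obtain ⟨c, rfl⟩ := h
  have hN : 0 < N := by linarith
  have : c < 1 := by nlinarith
  have : -1 < c := by nlinarith
  have : c = 0 := by omega
  simp [this]

lemma wal_z2 (a : ZMod 2) : a = 0 ∨ a = 1 := by
  revert a; decide

lemma extSig_true (m : ℕ) (u : Fin m → ZMod 2) (i : Fin m) :
    extSig m u (i : ℕ) = true ↔ u i = 1 := by
  unfold extSig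
  rw [decide_eq_true_iff]
  constructor
  · rintro ⟨l, h | h⟩
    · have := wal_close h.2 (by have := i.2; have := l.2; push_cast; omega)
        (by have := i.2; have := l.2; push_cast; omega)
      have : i = l := by ext; omega
      rw [this]; exact h.1
    · have := wal_close h.2 (by have := i.2; have := l.2; push_cast; omega)
        (by have := i.2; have := l.2; push_cast; omega)
      have := i.2
      have := l.2
      omega
  · intro h
    exact ⟨i, Or.inl ⟨h, by simp⟩⟩

lemma extSig_congr (m : ℕ) (u : Fin m → ZMod 2) (i j : ℤ)
    (h : ((2 * m : ℕ) : ℤ) ∣ i - j) : extSig m u i = extSig m u j := by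
  have key : ∀ a : ℤ, ((2 * m : ℕ) : ℤ) ∣ i - a ↔ ((2 * m : ℕ) : ℤ) ∣ j - a := by
    intro a
    have : i - a = (i - j) + (j - a) := by ring
    rw [this, Int.dvd_add_right h]
  unfold extSig
  simp only [sub_sub, key]

lemma extSig_rep (m : ℕ) (hm : 1 ≤ m) (j : ℤ) :
    ∃ i : Fin m, ((2 * m : ℕ) : ℤ) ∣ j - (i : ℕ) ∨ ((2 * m : ℕ) : ℤ) ∣ j - m - (i : ℕ) := by
  have h0 : ((2 * m : ℕ) : ℤ) ≠ 0 := by push_cast; omega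
  have h1 := Int.emod_nonneg j h0
  have h2 := Int.emod_lt_of_pos j (b := ((2 * m : ℕ) : ℤ)) (by push_cast; omega)
  have h3 : ((2 * m : ℕ) : ℤ) ∣ j - j % ((2 * m : ℕ) : ℤ) := Int.dvd_self_sub_emod
  generalize j % ((2 * m : ℕ) : ℤ) = r at *
  push_cast at h2
  by_cases hr : r < m
  · refine ⟨⟨r.toNat, by omega⟩, Or.inl ?_⟩
    simpa [h1] using h3
  · refine ⟨⟨(r - m).toNat, by omega⟩, Or.inr ?_⟩
    have : ((r - m).toNat : ℤ) = r - m := by omega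
    simp only [this]
    have : j - m - (r - m) = j - r := by ring
    rw [this]; exact h3

lemma extSig_anti (m : ℕ) (hm : 1 ≤ m) (u : Fin m → ZMod 2) (j : ℤ) :
    extSig m u (j + m) = !extSig m u j := by
  have key : ∀ i : Fin m, extSig m u ((i : ℕ) + m) = !extSig m u (i : ℕ) := by
    intro i
    have h1 : extSig m u ((i : ℕ) + m) = true ↔ u i = 0 := by
      unfold extSig
      rw [decide_eq_true_iff]
      constructor
      · rintro ⟨l, h | h⟩
        · have := i.2
          have := l.2
          have := wal_close h.2 (by push_cast; omega) (by push_cast; omega)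
          omega
        · have := i.2
          have := l.2
          have := wal_close h.2 (by push_cast; omega) (by push_cast; omega)
          have : i = l := by ext; omega
          rw [this]; exact h.1
      · intro h
        exact ⟨i, Or.inr ⟨h, by simp⟩⟩
    have h2 := extSig_true m u i
    rcases wal_z2 (u i) with h | h
    · have : extSig m u (i : ℕ) ≠ true := by rw [ne_eq, h2, h]; decide
      rw [h1.2 h]; simpa using this
    · have : extSig m u ((i : ℕ) + m) ≠ true := by rw [ne_eq, h1, h]; decide
      rw [h2.2 h]; simpa using this
  obtain ⟨i, h | h⟩ := extSig_rep m hm j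
  · rw [extSig_congr m u j _ h, ← key, extSig_congr]
    simpa using h
  · rw [extSig_congr m u j (i + m) (by convert h using 1; ring), key,
      extSig_congr m u (j + m) i]
    · simp
    · have : j + m - (i : ℕ) = (j - m - (i : ℕ)) + ((2 * m : ℕ) : ℤ) := by push_cast; ring
      rw [this]
      exact Int.dvd_add h (dvd_refl _)

lemma wal_cast_eq (m : ℕ) (a b : ℤ) :
    ((a : ZMod (2 * m)) = (b : ZMod (2 * m))) ↔ ((2 * m : ℕ) : ℤ) ∣ a - b := by
  rw [← sub_eq_zero, ← Int.cast_sub, ZMod.intCast_zmod_eq_zero_iff_dvd] 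

lemma wal_cast_2m (m : ℕ) : (m : ZMod (2 * m)) + (m : ZMod (2 * m)) = 0 := by
  have := ZMod.natCast_self (2 * m)
  push_cast at this
  rw [← this]; ring

/-- `C_{j+m}⁺` is the reverse of `C_j⁺`. -/
lemma Cplus_rev (m : ℕ) (hm : 1 ≤ m) (j : ZMod (2 * m)) (x y : WVert m)
    (h : Cplus m j y x) : Cplus m (j + m) x y := by
  have h2 := wal_cast_2m m
  rcases h with ⟨rfl, rfl⟩ | ⟨rfl, rfl⟩ | ⟨k, hk, rfl, rfl⟩ | ⟨k, hk1, hk, rfl, rfl⟩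
  · right; left
    refine ⟨?_, rfl⟩
    rw [add_assoc, h2, add_zero]
  · left; exact ⟨rfl, rfl⟩
  · right; right; left
    refine ⟨m - 1 - k, by omega, ?_, ?_⟩
    · congr 1
      rw [Nat.cast_sub hk, Nat.cast_sub hm]; push_cast; ring
    · congr 1
      rw [Nat.cast_sub hk, Nat.cast_sub hm]; push_cast; linear_combination -h2
  · right; right; right
    refine ⟨m - k, by omega, by omega, ?_, ?_⟩
    · congr 1
      rw [Nat.cast_sub (by omega)]; linear_combination -h2
    · congr 1
      rw [Nat.cast_sub (by omega)]; ring

lemma warc_iff (m : ℕ) (hm : 1 ≤ m) (u : Fin m → ZMod 2) (x y : WVert m) :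
    warc m u x y ↔ ∃ j : ℤ, extSig m u j = true ∧ Cplus m (j : ZMod (2 * m)) x y := by
  constructor
  · rintro ⟨i, ⟨h1, h2⟩ | ⟨h1, h2⟩⟩
    · exact ⟨(i : ℕ), (extSig_true m u i).2 h1, by simpa using h2⟩
    · refine ⟨(i : ℕ) + m, ?_, by simpa using Cplus_rev m hm _ _ _ h2⟩
      have h3 := (extSig_true m u i).not.2 (by rw [h1]; decide)
      rw [extSig_anti m hm]
      simpa using h3
  · rintro ⟨j, h1, h2⟩
    obtain ⟨i, h | h⟩ := extSig_rep m hm j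
    · refine ⟨i, Or.inl ⟨?_, ?_⟩⟩
      · rw [← extSig_true, ← extSig_congr m u j _ h]; exact h1
      · have := (wal_cast_eq m _ _).2 h
        rw [this] at h2
        simpa using h2
    · have h' : ((2 * m : ℕ) : ℤ) ∣ j - ((i : ℕ) + m) := by convert h using 1; ring
      refine ⟨i, Or.inr ⟨?_, ?_⟩⟩
      · rw [extSig_congr m u j _ h', extSig_anti m hm] at h1
        rcases wal_z2 (u i) with h0 | h0
        · exact h0
        · rw [(extSig_true m u i).2 h0] at h1
          simp at h1
      · have h3 := (wal_cast_eq m _ _).2 h'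
        rw [h3] at h2
        have h4 := Cplus_rev m hm _ _ _ h2
        have h5 : (((((i : ℕ) : ℤ) + (m : ℤ) : ℤ) : ZMod (2 * m)) + m) = ((i : ℕ) : ZMod (2 * m)) := by
          push_cast
          rw [add_assoc, wal_cast_2m, add_zero]
        rw [h5] at h4
        exact h4

lemma warc_none_some (m : ℕ) (hm : 1 ≤ m) (u : Fin m → ZMod 2) (x : ℤ) :
    warc m u none (some (x : ZMod (2 * m))) ↔ extSig m u x = true := by
  rw [warc_iff m hm]
  constructor
  · rintro ⟨j, h1, h2⟩
    simp only [Cplus, reduceCtorEq, false_and, and_false, exists_const, or_false, true_and,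
      Option.some.injEq] at h2
    rw [wal_cast_eq] at h2
    rw [extSig_congr m u _ _ h2]; exact h1
  · intro h
    exact ⟨x, h, Or.inl ⟨rfl, rfl⟩⟩

lemma warc_some_none (m : ℕ) (hm : 1 ≤ m) (u : Fin m → ZMod 2) (x : ℤ) :
    warc m u (some (x : ZMod (2 * m))) none ↔ extSig m u x = false := by
  rw [warc_iff m hm]
  constructor
  · rintro ⟨j, h1, h2⟩
    simp only [Cplus, reduceCtorEq, and_false, exists_const, or_false, and_true,
      Option.some.injEq, false_or] at h2
    have h3 : ((x : ℤ) : ZMod (2 * m)) = ((j + m : ℤ) : ZMod (2 * m)) := by simpa using h2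
    rw [wal_cast_eq] at h3
    rw [extSig_congr m u _ _ h3, extSig_anti m hm, h1]; rfl
  · intro h
    refine ⟨x + m, by rw [extSig_anti m hm, h]; rfl, Or.inr (Or.inl ⟨?_, rfl⟩)⟩
    push_cast
    rw [add_assoc, wal_cast_2m, add_zero]

/-- The basic description of the arcs between integer vertices. -/
lemma warc_some_some (m : ℕ) (hm : 1 ≤ m) (u : Fin m → ZMod 2) (x t : ℤ)
    (ht1 : 1 ≤ t) (ht2 : t < 2 * m) :
    warc m u (some (x : ZMod (2 * m))) (some ((x + t : ℤ) : ZMod (2 * m))) ↔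
      extSig m u (x + t / 2) = decide (t % 2 = 1) := by
  rw [warc_iff m hm]
  constructor
  · rintro ⟨j, h1, h2⟩
    simp only [Cplus, reduceCtorEq, false_and, and_false, false_or,
      Option.some.injEq] at h2
    rcases h2 with ⟨k, hk, h2, h3⟩ | ⟨k, hk1, hk, h2, h3⟩
    · have h2' : ((x : ℤ) : ZMod (2 * m)) = ((j - k : ℤ) : ZMod (2 * m)) := by simpa using h2
      have h3' : ((x + t : ℤ) : ZMod (2 * m)) = ((j + k + 1 : ℤ) : ZMod (2 * m)) := by
        simpa using h3
      rw [wal_cast_eq] at h2' h3'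
      have h4 := wal_close (Int.dvd_sub h3' h2') (by push_cast; omega) (by push_cast; omega)
      have h5 : decide (t % 2 = 1) = true := by simp; omega
      rw [h5, ← h1]
      apply extSig_congr
      convert h2' using 1
      omega
    · have h2' : ((x : ℤ) : ZMod (2 * m)) = ((j + k : ℤ) : ZMod (2 * m)) := by simpa using h2
      have h3' : ((x + t : ℤ) : ZMod (2 * m)) = ((j - k : ℤ) : ZMod (2 * m)) := by
        simpa using h3
      rw [wal_cast_eq] at h2' h3'
      have h6 := Int.dvd_sub (Int.dvd_sub h3' h2') (dvd_refl _)
      have h4 := wal_close h6 (by push_cast; omega) (by push_cast; omega)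
      push_cast at h4
      have h5 : decide (t % 2 = 1) = false := by simp; omega
      have h7 : extSig m u (x + t / 2) = extSig m u (j + m) := by
        apply extSig_congr
        convert h2' using 1
        omega
      rw [h5, h7, extSig_anti m hm, h1]; rfl
  · intro h
    by_cases hp : t % 2 = 1
    · refine ⟨x + t / 2, by simpa [hp] using h, Or.inr (Or.inr (Or.inl
        ⟨(t / 2).toNat, by omega, ?_, ?_⟩))⟩
      · congr 1
        have : (((t / 2).toNat : ℕ) : ZMod (2 * m)) = ((t / 2 : ℤ) : ZMod (2 * m)) := by
          rw [← Int.cast_natCast]; congr 1; omega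
        rw [this]; push_cast; ring
      · congr 1
        have : (((t / 2).toNat : ℕ) : ZMod (2 * m)) = ((t / 2 : ℤ) : ZMod (2 * m)) := by
          rw [← Int.cast_natCast]; congr 1; omega
        rw [this, ← Int.cast_add, ← Int.cast_one, ← Int.cast_add]; congr 1; omega
    · have hc : (((m - t / 2).toNat : ℕ) : ZMod (2 * m)) = ((m - t / 2 : ℤ) : ZMod (2 * m)) := by
        rw [← Int.cast_natCast]; congr 1; omega
      refine ⟨x + t / 2 + m, by rw [extSig_anti m hm, h]; simpa using hp,
        Or.inr (Or.inr (Or.inr ⟨(m - t / 2).toNat, by omega, by omega, ?_, ?_⟩))⟩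
      · congr 1
        rw [hc]; push_cast; linear_combination - wal_cast_2m m
      · congr 1
        rw [hc, ← Int.cast_sub]; congr 1; omega

/-- `p` and `q` have the same out-neighbours outside `{p, q, w}`. -/
def Agree {α : Type*} (R : α → α → Prop) (p q w : α) : Prop :=
  ∀ z, z ≠ p → z ≠ q → z ≠ w → (R p z ↔ R q z)

lemma wal_rep (m : ℕ) (hm : 1 ≤ m) (P : ℤ) (z : ZMod (2 * m)) :
    ∃ t : ℤ, 0 ≤ t ∧ t < 2 * m ∧ z = ((P + t : ℤ) : ZMod (2 * m)) := by
  have : NeZero (2 * m) := ⟨by omega⟩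
  refine ⟨((z.val : ℤ) - P) % (2 * m : ℤ), Int.emod_nonneg _ (by omega),
    Int.emod_lt_of_pos _ (by omega), ?_⟩
  have h1 : z = ((z.val : ℤ) : ZMod (2 * m)) := by simp
  conv_lhs => rw [h1]
  rw [wal_cast_eq]
  have h3 : ((2 * m : ℕ) : ℤ) ∣ ((z.val : ℤ) - P) - ((z.val : ℤ) - P) % ((2 * m : ℕ) : ℤ) :=
    Int.dvd_self_sub_emod
  push_cast at h3 ⊢
  convert h3 using 1
  ring

lemma wal_inj (m : ℕ) (P s t : ℤ) (h : ((P + s : ℤ) : ZMod (2 * m)) = ((P + t : ℤ) : ZMod (2 * m)))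
    (h1 : s - t < 2 * m) (h2 : t - s < 2 * m) : s = t := by
  rw [wal_cast_eq] at h
  have := wal_close h (by push_cast; omega) (by push_cast; omega)
  omega

lemma wal_some_inj (m : ℕ) (P s t : ℤ)
    (h1 : s - t < 2 * m) (h2 : t - s < 2 * m) :
    (some ((P + s : ℤ) : ZMod (2 * m)) = some ((P + t : ℤ) : ZMod (2 * m))) ↔ s = t := by
  constructor
  · intro h
    exact wal_inj m P s t (Option.some.inj h) h1 h2
  · rintro rfl; rfl

/-- Arcs out of `P + Q` to `P + t`, for `t > Q`. -/
lemma warc_above (m : ℕ) (hm : 1 ≤ m) (u : Fin m → ZMod 2) (P Q t : ℤ)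
    (h0 : 0 ≤ Q) (h1 : Q < t) (h2 : t < 2 * m) :
    warc m u (some ((P + Q : ℤ) : ZMod (2 * m))) (some ((P + t : ℤ) : ZMod (2 * m))) ↔
      extSig m u (P + (Q + (t - Q) / 2)) = decide ((t - Q) % 2 = 1) := by
  have := warc_some_some m hm u (P + Q) (t - Q) (by omega) (by omega)
  rw [← add_assoc, ← this]
  have : P + Q + (t - Q) = P + t := by ring
  rw [this]

/-- Arcs out of `P + Q` to `P + t`, for `t < Q`. -/
lemma warc_below (m : ℕ) (hm : 1 ≤ m) (u : Fin m → ZMod 2) (P Q t : ℤ)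
    (h0 : 0 ≤ t) (h1 : t < Q) (h2 : Q < 2 * m) :
    warc m u (some ((P + Q : ℤ) : ZMod (2 * m))) (some ((P + t : ℤ) : ZMod (2 * m))) ↔
      extSig m u (P + (Q + (t - Q) / 2)) = !decide ((t - Q) % 2 = 1) := by
  have := warc_some_some m hm u (P + Q) (t - Q + 2 * m) (by omega) (by omega)
  have h3 : ((P + Q + (t - Q + 2 * m) : ℤ) : ZMod (2 * m)) = ((P + t : ℤ) : ZMod (2 * m)) := by
    rw [wal_cast_eq]
    push_cast
    exact ⟨1, by ring⟩
  rw [h3] at this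
  rw [this]
  have h4 : P + Q + (t - Q + 2 * m) / 2 = P + (Q + (t - Q) / 2) + m := by omega
  have h5 : (t - Q + 2 * m) % 2 = (t - Q) % 2 := by omega
  rw [h4, h5, extSig_anti m hm]
  generalize extSig m u (P + (Q + (t - Q) / 2)) = a
  generalize decide ((t - Q) % 2 = 1) = b
  revert a b; decide

lemma warc_asymm (m : ℕ) (hm : 1 ≤ m) (u : Fin m → ZMod 2) (x y : ZMod (2 * m)) (hxy : x ≠ y)
    (h1 : warc m u (some x) (some y)) (h2 : warc m u (some y) (some x)) : False := by
  obtain ⟨P, -, -, rfl⟩ := wal_rep m hm 0 x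
  obtain ⟨t, ht0, ht, rfl⟩ := wal_rep m hm (0 + P) y
  have ht' : t ≠ 0 := by
    rintro rfl
    simp at hxy
  rw [warc_some_some m hm u _ _ (by omega) ht] at h1
  have h3 : ((0 + P : ℤ) : ZMod (2 * m)) = ((0 + P + 0 : ℤ) : ZMod (2 * m)) := by simp
  rw [h3, warc_below m hm u _ _ _ (by omega) (by omega) ht] at h2
  have h4 : t + (0 - t) / 2 = t / 2 := by omega
  have h5 : (0 - t) % 2 = t % 2 := by omega
  rw [h4, h5, h1] at h2
  simp at h2

lemma agree_iff (m : ℕ) (hm : 1 ≤ m) (u : Fin m → ZMod 2) (P Q : ℤ) (w : WVert m)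
    (hQ0 : 0 < Q) (hQ : Q < 2 * m) :
    Agree (warc m u) (some (P : ZMod (2 * m))) (some ((P + Q : ℤ) : ZMod (2 * m))) w ↔
    ((none ≠ w → extSig m u P = extSig m u (P + Q)) ∧
      ∀ t : ℤ, 0 < t → t < 2 * m → t ≠ Q → some ((P + t : ℤ) : ZMod (2 * m)) ≠ w →
        ((Q < t → (extSig m u (P + t / 2) = decide (t % 2 = 1) ↔
          extSig m u (P + (Q + (t - Q) / 2)) = decide ((t - Q) % 2 = 1))) ∧
        (t < Q → (extSig m u (P + t / 2) = decide (t % 2 = 1) ↔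
          extSig m u (P + (Q + (t - Q) / 2)) = !decide ((t - Q) % 2 = 1))))) := by
  constructor
  · intro h
    constructor
    · intro hw
      have := h none (by simp) (by simp) hw
      rw [warc_some_none m hm, warc_some_none m hm] at this
      generalize extSig m u P = a at *
      generalize extSig m u (P + Q) = b at *
      revert a b; decide
    · intro t h0 h1 h2 h3
      have h4 : some ((P + t : ℤ) : ZMod (2 * m)) ≠ some (P : ZMod (2 * m)) := by
        have := wal_some_inj m P t 0 (by omega) (by omega)
        rw [add_zero] at this
        rw [ne_eq, this]; omega
      have := h _ h4 (by rw [ne_eq, wal_some_inj m P _ _ (by omega) (by omega)]; exact h2) h3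
      rw [warc_some_some m hm u P t (by omega) h1] at this
      constructor
      · intro h5
        rw [this, warc_above m hm u P Q t (by omega) h5 h1]
      · intro h5
        rw [this, warc_below m hm u P Q t (by omega) h5 hQ]
  · rintro ⟨h1, h2⟩ z hz1 hz2 hz3
    rcases z with _ | z
    · rw [warc_some_none m hm, warc_some_none m hm, h1 hz3]
    · obtain ⟨t, ht0, ht, rfl⟩ := wal_rep m hm P z
      have h3 : t ≠ 0 := by rintro rfl; simp at hz1
      have h4 : t ≠ Q := by rintro rfl; simp at hz2
      have := h2 t (by omega) ht h4 hz3
      rw [warc_some_some m hm u P t (by omega) ht]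
      rcases lt_or_gt_of_ne h4 with h5 | h5
      · rw [this.2 h5, warc_below m hm u P Q t (by omega) h5 hQ]
      · rw [this.1 h5, warc_above m hm u P Q t (by omega) h5 ht]

/-- Lemma A: `*` agrees with no vertex up to one exception. -/
lemma not_agree_none (k : ℕ) (hk : 2 ≤ k) (u : Fin (2 * k) → ZMod 2) (c w : WVert (2 * k))
    (hc : c ≠ none) (h : Agree (warc (2 * k) u) none c w) : False := by
  rcases c with _ | c
  · exact hc rfl
  obtain ⟨P, -, -, rfl⟩ := wal_rep (2 * k) (by omega) 0 c
  rw [zero_add] at h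
  have hm : 1 ≤ 2 * k := by omega
  have key : ∀ t : ℤ, 0 < t → t < 4 * k → some ((P + t : ℤ) : ZMod (2 * (2 * k))) ≠ w →
      (extSig (2 * k) u (P + t) = true ↔ extSig (2 * k) u (P + t / 2) = decide (t % 2 = 1)) := by
    intro t h0 h1 h2
    have h4 : some ((P + t : ℤ) : ZMod (2 * (2 * k))) ≠ some (P : ZMod (2 * (2 * k))) := by
      have := wal_some_inj (2 * k) P t 0 (by push_cast; omega) (by push_cast; omega)
      rw [add_zero] at this
      rw [ne_eq, this]; omega
    have := h _ (by simp) h4 h2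
    rw [warc_none_some _ hm, warc_some_some _ hm _ _ _ (by omega) (by push_cast; omega)] at this
    exact this
  have anti := extSig_anti (2 * k) hm u
  have a1 := anti (P + (2 * k - 1))
  have a2 := anti (P + (2 * k - 2))
  by_cases hw : some ((P + (4 * k - 1) : ℤ) : ZMod (2 * (2 * k))) = w
  · subst hw
    have ne : ∀ t : ℤ, 0 < t → t < 4 * k - 1 → some ((P + t : ℤ) : ZMod (2 * (2 * k))) ≠
        some ((P + (4 * k - 1) : ℤ) : ZMod (2 * (2 * k))) := by
      intro t h0 h1
      rw [ne_eq, wal_some_inj _ _ _ _ (by push_cast; omega) (by push_cast; omega)]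
      omega
    have e1 := key (4 * k - 2) (by omega) (by omega) (ne _ (by omega) (by omega))
    have e2 := key (2 * k - 2) (by omega) (by omega) (ne _ (by omega) (by omega))
    have e3 := key (2 * k - 1) (by omega) (by omega) (ne _ (by omega) (by omega))
    have i1 : ((4 * k - 2 : ℤ)) / 2 = 2 * k - 1 := by omega
    have i2 : ((2 * k - 2 : ℤ)) / 2 = k - 1 := by omega
    have i3 : ((2 * k - 1 : ℤ)) / 2 = k - 1 := by omega
    have j1 : ((4 * k - 2 : ℤ)) % 2 = 0 := by omega
    have j2 : ((2 * k - 2 : ℤ)) % 2 = 0 := by omega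
    have j3 : ((2 * k - 1 : ℤ)) % 2 = 1 := by omega
    have l2 : P + (2 * k - 2) + ((2 * k : ℕ) : ℤ) = P + (4 * k - 2) := by push_cast; ring
    rw [l2] at a2
    rw [i1, j1, a2] at e1
    rw [i2, j2] at e2
    rw [i3, j3] at e3
    revert e1 e2 e3
    generalize extSig (2 * k) u (P + (2 * k - 2)) = a
    generalize extSig (2 * k) u (P + (2 * k - 1)) = b
    generalize extSig (2 * k) u (P + (k - 1)) = c
    revert a b c
    decide
  · have e := key (4 * k - 1) (by omega) (by omega) hw
    have i1 : ((4 * k - 1 : ℤ)) / 2 = 2 * k - 1 := by omega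
    have j1 : ((4 * k - 1 : ℤ)) % 2 = 1 := by omega
    have l2 : P + (2 * k - 1) + ((2 * k : ℕ) : ℤ) = P + (4 * k - 1) := by push_cast; ring
    rw [l2] at a1
    rw [i1, j1, a1] at e
    revert e
    generalize extSig (2 * k) u (P + (2 * k - 1)) = b
    revert b
    decide

lemma Agree.symm {α : Type*} {R : α → α → Prop} {p q w : α} (h : Agree R p q w) :
    Agree R q p w := fun z h1 h2 h3 => (h z h2 h1 h3).symm

/-- Lemma D: where the signature is constant, the two ends of the block agree
up to one exception. -/
lemma agree_block (k : ℕ) (hk : 2 ≤ k) (u : Fin (2 * k) → ZMod 2) (P : ℤ) (e : Bool)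
    (h : ∀ i : ℤ, 0 ≤ i → i < 2 * k → extSig (2 * k) u (P + i) = e) :
    Agree (warc (2 * k) u) (some (P : ZMod (2 * (2 * k))))
      (some ((P + (2 * k - 1) : ℤ) : ZMod (2 * (2 * k))))
      (some ((P + 2 * k : ℤ) : ZMod (2 * (2 * k)))) := by
  have hm : 1 ≤ 2 * k := by omega
  have h' : ∀ i : ℤ, 2 * k ≤ i → i < 4 * k → extSig (2 * k) u (P + i) = !e := by
    intro i h1 h2
    rw [← h (i - 2 * k) (by omega) (by omega), ← extSig_anti _ hm]
    congr 1
    push_cast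
    ring
  rw [agree_iff _ hm _ _ _ _ (by omega) (by push_cast; omega)]
  refine ⟨fun _ => ?_, ?_⟩
  · rw [h _ (by omega) (by omega)]
    simpa using h 0 (by omega) (by omega)
  · intro t h0 h1 h2 h3
    push_cast at h1
    rw [ne_eq, wal_some_inj _ _ _ _ (by push_cast; omega) (by push_cast; omega)] at h3
    have hh := h (t / 2) (by omega) (by omega)
    rw [hh]
    constructor
    · intro h4
      rw [h' _ (by omega) (by omega)]
      rcases Int.emod_two_eq_zero_or_one t with h5 | h5
      · have : (t - (2 * k - 1)) % 2 = 1 := by omega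
        rw [h5, this]; cases e <;> decide
      · have : (t - (2 * k - 1)) % 2 = 0 := by omega
        rw [h5, this]; cases e <;> decide
    · intro h4
      rw [h _ (by omega) (by omega)]
      rcases Int.emod_two_eq_zero_or_one t with h5 | h5
      · have : (t - (2 * k - 1)) % 2 = 1 := by omega
        rw [h5, this]; cases e <;> decide
      · have : (t - (2 * k - 1)) % 2 = 0 := by omega
        rw [h5, this]; cases e <;> decide

lemma wal_const (f : ℤ → Bool) (a b : ℤ) (h : ∀ i, a ≤ i → i < b → f i = f (i + 1)) :
    ∀ i, a ≤ i → i ≤ b → f i = f a := by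
  intro i hi
  induction i, hi using Int.leInduction with
  | base => intro _; rfl
  | succ n hn ih =>
    intro h1
    rw [← h n hn (by omega), ih (by omega)]

lemma wal_shift_sum (m : ℕ) (g : ℤ → ZMod 2) (anti : ∀ j, g (j + m) = g j + 1) (h : ℕ) :
    ∑ i ∈ Finset.range m, g (h + i) = (∑ i ∈ Finset.range m, g i) + h := by
  induction h with
  | zero => simp
  | succ h ih =>
    have h1 := Finset.sum_range_succ (fun i : ℕ => g (h + i)) m
    have h2 := Finset.sum_range_succ' (fun i : ℕ => g (h + i)) m
    rw [h1, ih, anti] at h2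
    simp only [Nat.cast_zero, add_zero] at h2
    have h3 : ∀ i : ℕ, g ((h + 1 : ℕ) + i) = g (h + ((i + 1 : ℕ) : ℤ)) := by
      intro i; congr 1; push_cast; ring
    simp only [h3]
    push_cast at h2 ⊢
    linear_combination -h2

/-- Same parity: the exception has to be `*`. -/
lemma wal_even (m : ℕ) (f : ℤ → Bool) (anti : ∀ j, f (j + m) = !f j) (h : ℕ) (h0 : 0 < h)
    (hm : h < m)
    (E1 : ∀ i : ℤ, h < i → i < m → f i = f (h + i))
    (E2 : ∀ i : ℤ, 0 < i → i < h → f i = !f (h + i)) : f 0 = !f (2 * h) := by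
  set g : ℤ → ZMod 2 := fun j => if f j then 1 else 0 with hg
  have ganti : ∀ j, g (j + m) = g j + 1 := by
    intro j
    simp only [hg, anti]
    cases f j <;> decide
  have hs := wal_shift_sum m g ganti h
  have hcard : ∑ i ∈ Finset.range m, (if i < h then (1 : ZMod 2) else 0) = h := by
    rw [← Finset.sum_filter, Finset.sum_const]
    have : Finset.filter (fun i => i < h) (Finset.range m) = Finset.range h := by
      ext i; simp; omega
    rw [this]
    simp
  have hsum : ∑ i ∈ Finset.range m, (g i + g (h + i) + (if i < h then (1 : ZMod 2) else 0)) = 0 := by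
    rw [Finset.sum_add_distrib, Finset.sum_add_distrib, hs, hcard]
    generalize ∑ i ∈ Finset.range m, g i = a
    generalize (h : ZMod 2) = b
    revert a b; decide
  have hsub : ({0, h} : Finset ℕ) ⊆ Finset.range m := by
    intro x hx
    simp at hx
    simp
    omega
  rw [← Finset.sum_subset hsub, Finset.sum_pair (by omega)] at hsum
  · have e : (h : ℤ) + h = 2 * h := by ring
    simp only [h0, if_true, lt_irrefl, if_false, Nat.cast_zero, add_zero, e, hg] at hsum
    revert hsum
    generalize f 0 = a
    generalize f h = b
    generalize f (2 * h) = c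
    revert a b c
    decide
  · intro x hx hx'
    simp at hx hx'
    rcases lt_or_ge x h with h1 | h1
    · have := E2 x (by omega) (by omega)
      simp only [hg, this, h1, if_true]
      cases f (h + x) <;> decide
    · have := E1 x (by omega) (by omega)
      have h2 : ¬ x < h := by omega
      simp only [hg, this, h2, if_false]
      cases f (h + x) <;> decide

/-- Opposite parity: only two configurations have an exception different from `*`. -/
lemma wal_odd (m : ℤ) (f : ℤ → Bool) (anti : ∀ j, f (j + m) = !f j) (c W : ℤ)
    (hc0 : 0 ≤ c) (hcm : c < m) (hW0 : 0 < W) (hWm : W < 2 * m) (hWQ : W ≠ 2 * c + 1)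
    (E1 : ∀ i, c + 1 ≤ i → i < m → 2 * i ≠ W → f (c + i) = !f i)
    (E2 : ∀ i, c + 1 ≤ i → i < m → 2 * i + 1 ≠ W → f (c + 1 + i) = !f i)
    (E3 : ∀ i, 1 ≤ i → i ≤ c → 2 * i ≠ W → f (c + i) = f i)
    (E4 : ∀ i, 0 ≤ i → i < c → 2 * i + 1 ≠ W → f (c + 1 + i) = f i)
    (hc : f c = true) (h0 : f 0 = f (2 * c + 1)) :
    (W = m ∧ ∀ i, 0 ≤ i → i < m → f i = true) ∨
    (W = 1 ∧ ∀ i, 1 ≤ i → i ≤ m → f i = true) := by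
  have hcm' : f (c + m) = false := by rw [anti, hc]; rfl
  have hm0 : f m = !f 0 := by simpa using anti 0
  rcases lt_or_gt_of_ne hWQ with hlt | hgt
  · -- `W < Q`
    right
    have k1 := wal_const f (2 * c + 1) (c + m) (by
      intro i hi1 hi2
      have e1 := E1 (i - c) (by omega) (by omega) (by omega)
      have e2 := E2 (i - c) (by omega) (by omega) (by omega)
      rw [show c + (i - c) = i by ring] at e1
      rw [show c + 1 + (i - c) = i + 1 by ring] at e2
      rw [e1, e2])
    have k2 := k1 (c + m) (by omega) (by omega)
    rw [hcm'] at k2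
    have f0 : f 0 = false := by rw [h0, ← k2]
    have k3 : ∀ i, c + 1 ≤ i → i < m → f i = true := by
      intro i h1 h2
      have e1 := E1 i h1 h2 (by omega)
      have := k1 (c + i) (by omega) (by omega)
      rw [e1, ← k2] at this
      simpa using this
    have hc1 : f (c + 1) = true := by
      by_cases h : c + 1 < m
      · exact k3 _ le_rfl h
      · rw [show c + 1 = m by omega, hm0, f0]; rfl
    by_cases hW1 : W = 1
    · refine ⟨hW1, ?_⟩
      have k4 := wal_const f (c + 1) (2 * c) (by
        intro i hi1 hi2
        have e1 := E3 (i - c) (by omega) (by omega) (by omega)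
        have e2 := E4 (i - c) (by omega) (by omega) (by omega)
        rw [show c + (i - c) = i by ring] at e1
        rw [show c + 1 + (i - c) = i + 1 by ring] at e2
        rw [e1, e2])
      intro i h1 h2
      by_cases h3 : i ≤ c
      · have e := E3 i h1 h3 (by omega)
        rw [← e, k4 _ (by omega) (by omega), hc1]
      · by_cases h4 : i < m
        · exact k3 i (by omega) h4
        · rw [show i = m by omega, hm0, f0]; rfl
    · exfalso
      have := E4 0 le_rfl (by omega) (by omega)
      rw [add_zero, hc1, f0] at this
      simp at this
  · -- `Q < W`
    left
    have k4 := wal_const f (c + 1) (2 * c) (by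
      intro i hi1 hi2
      have e1 := E3 (i - c) (by omega) (by omega) (by omega)
      have e2 := E4 (i - c) (by omega) (by omega) (by omega)
      rw [show c + (i - c) = i by ring] at e1
      rw [show c + 1 + (i - c) = i + 1 by ring] at e2
      rw [e1, e2])
    have f0 : f 0 = true := by
      by_cases h : c = 0
      · rw [← h]; exact hc
      · have e1 := E4 0 le_rfl (by omega) (by omega)
        have e2 := E3 c (by omega) le_rfl (by omega)
        have e3 := k4 (2 * c) (by omega) (by omega)
        rw [add_zero] at e1
        rw [show c + c = 2 * c by ring] at e2
        rw [← e1, ← e3, e2, hc]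
    have k5 : ∀ i, c + 1 ≤ i → i ≤ 2 * c → f i = true := by
      intro i h1 h2
      have e2 := E3 c (by omega) le_rfl (by omega)
      rw [show c + c = 2 * c by ring] at e2
      rw [k4 i h1 h2, ← k4 (2 * c) (by omega) le_rfl, e2, hc]
    have k6 : ∀ i, 0 ≤ i → i ≤ 2 * c + 1 → f i = true := by
      intro i h1 h2
      by_cases h3 : i = 0
      · rw [h3, f0]
      by_cases h4 : i ≤ c
      · rw [← E3 i (by omega) h4 (by omega), k5 _ (by omega) (by omega)]
      by_cases h5 : i ≤ 2 * c
      · exact k5 i (by omega) h5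
      · rw [show i = 2 * c + 1 by omega, ← h0, f0]
    have hc1 := k6 (c + 1) (by omega) (by omega)
    rcases Int.even_or_odd' W with ⟨j, hj | hj⟩
    · have hjc : j = c + 1 := by
        by_contra hne
        have e1 := E1 (c + 1) le_rfl (by omega) (by omega)
        have e2 := E2 (c + 1) le_rfl (by omega) (by omega)
        have e0 := k6 (2 * c + 1) (by omega) le_rfl
        rw [show c + (c + 1) = 2 * c + 1 by ring, e0, hc1] at e1
        simp at e1
      subst hjc
      have k7 := wal_const f (2 * c + 2) (c + m) (by
        intro i hi1 hi2
        have e1 := E1 (i - c) (by omega) (by omega) (by omega)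
        have e2 := E2 (i - c) (by omega) (by omega) (by omega)
        rw [show c + (i - c) = i by ring] at e1
        rw [show c + 1 + (i - c) = i + 1 by ring] at e2
        rw [e1, e2])
      have k8 := k7 (c + m) (by omega) le_rfl
      rw [hcm'] at k8
      have k9 : ∀ i, 0 ≤ i → i < m → f i = true := by
        intro i h1 h2
        by_cases h3 : i ≤ 2 * c + 1
        · exact k6 i h1 h3
        · have e2 := E2 i (by omega) h2 (by omega)
          rw [k7 _ (by omega) (by omega), ← k8] at e2
          simpa using e2.symm
      refine ⟨?_, k9⟩
      rcases lt_trichotomy (2 * (c + 1)) m with h | h | h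
      · have := k9 (2 * c + 2) (by omega) (by omega)
        rw [← k8] at this
        simp at this
      · omega
      · have := k6 m (by omega) (by omega)
        rw [hm0, f0] at this
        simp at this
    · exfalso
      have e1 := E1 (c + 1) le_rfl (by omega) (by omega)
      have e0 := k6 (2 * c + 1) (by omega) le_rfl
      rw [show c + (c + 1) = 2 * c + 1 by ring, e0, hc1] at e1
      simp at e1

/-- Lemma B: if the exceptional vertex of a twin arc is not `*`, that vertex itself is an
end of a pair of vertices which agree up to one exception. -/
lemma twin_exc (k : ℕ) (hk : 2 ≤ k) (v : Fin (2 * k) → ZMod 2) (p q w : ZMod (2 * (2 * k)))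
    (hpq : p ≠ q) (hwp : w ≠ p) (hwq : w ≠ q)
    (apq : warc (2 * k) v (some p) (some q)) (aqw : warc (2 * k) v (some q) (some w))
    (awp : ¬ warc (2 * k) v (some p) (some w))
    (hag : Agree (warc (2 * k) v) (some p) (some q) (some w)) :
    ∃ b c, b ≠ some w ∧ Agree (warc (2 * k) v) (some w) b c := by
  have hm : 1 ≤ 2 * k := by omega
  obtain ⟨P, -, -, rfl⟩ := wal_rep (2 * k) hm 0 p
  rw [zero_add] at *
  obtain ⟨Q, hQ0, hQ, rfl⟩ := wal_rep (2 * k) hm P q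
  obtain ⟨W, hW0, hW, rfl⟩ := wal_rep (2 * k) hm P w
  have hQ0' : Q ≠ 0 := by rintro rfl; simp at hpq
  have hW0' : W ≠ 0 := by rintro rfl; simp at hwp
  have hWQ : W ≠ Q := by rintro rfl; simp at hwq
  have hag' := hag
  rw [agree_iff _ hm _ _ _ _ (by omega) hQ] at hag'
  obtain ⟨h0, H⟩ := hag'
  replace h0 := h0 (by simp)
  have anti' := extSig_anti (2 * k) hm v
  rw [warc_some_some _ hm _ _ _ (by omega) (by omega)] at apq awp
  push_cast at hQ hW
  set f : ℤ → Bool := fun j => extSig (2 * k) v (P + j) with hf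
  have anti : ∀ j, f (j + (2 * k : ℕ)) = !f j := by
    intro j
    simp only [hf]
    rw [← anti', add_assoc]
  have hff : ∀ j, extSig (2 * k) v (P + j) = f j := fun _ => rfl
  have h0' : extSig (2 * k) v P = f 0 := by simp [hf]
  replace H : ∀ t : ℤ, 0 < t → t < 4 * k → t ≠ Q → t ≠ W →
      ((Q < t → (f (t / 2) = decide (t % 2 = 1) ↔
        f (Q + (t - Q) / 2) = decide ((t - Q) % 2 = 1))) ∧
      (t < Q → (f (t / 2) = decide (t % 2 = 1) ↔
        f (Q + (t - Q) / 2) = !decide ((t - Q) % 2 = 1)))) := by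
    intro t h1 h2 h3 h4
    refine H t h1 (by push_cast; omega) h3 ?_
    rw [ne_eq, wal_some_inj _ _ _ _ (by push_cast; omega) (by push_cast; omega)]
    exact h4
  rw [h0'] at h0
  simp only [hff] at h0 apq awp
  rcases Int.even_or_odd' Q with ⟨c, hc | hc⟩
  · -- same parity
    exfalso
    have hWodd : W % 2 = 1 := by
      by_contra hWe
      rcases lt_or_gt_of_ne hWQ with hlt | hgt
      · have e := (H (W + 1) (by omega) (by omega) (by omega) (by omega)).2 (by omega)
        rw [warc_below _ hm _ _ _ _ (by omega) hlt (by push_cast; omega), hff] at aqw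
        rw [show (W + 1) / 2 = W / 2 by omega, show (W + 1) % 2 = 1 by omega,
          show (W + 1 - Q) / 2 = (W - Q) / 2 by omega, show (W + 1 - Q) % 2 = 1 by omega] at e
        rw [show (W - Q) % 2 = 0 by omega] at aqw
        rw [show W % 2 = 0 by omega] at awp
        rw [aqw] at e
        revert e awp
        generalize f (W / 2) = a
        revert a; decide
      · have e := (H (W + 1) (by omega) (by omega) (by omega) (by omega)).1 (by omega)
        rw [warc_above _ hm _ _ _ _ (by omega) hgt (by push_cast; omega), hff] at aqw
        rw [show (W + 1) / 2 = W / 2 by omega, show (W + 1) % 2 = 1 by omega,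
          show (W + 1 - Q) / 2 = (W - Q) / 2 by omega, show (W + 1 - Q) % 2 = 1 by omega] at e
        rw [show (W - Q) % 2 = 0 by omega] at aqw
        rw [show W % 2 = 0 by omega] at awp
        rw [aqw] at e
        revert e awp
        generalize f (W / 2) = a
        revert a; decide
    have hcc : ((c.toNat : ℕ) : ℤ) = c := by omega
    have := wal_even (2 * k) f anti c.toNat (by omega) (by omega)
      (by
        rw [hcc]
        intro i h1 h2
        push_cast at h2
        have e := (H (2 * i) (by omega) (by omega) (by omega) (by omega)).1 (by omega)
        rw [show 2 * i / 2 = i by omega, show Q + (2 * i - Q) / 2 = c + i by omega,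
          show 2 * i % 2 = 0 by omega, show (2 * i - Q) % 2 = 0 by omega] at e
        revert e
        generalize f i = a
        generalize f (c + i) = b
        revert a b; decide)
      (by
        rw [hcc]
        intro i h1 h2
        have e := (H (2 * i) (by omega) (by omega) (by omega) (by omega)).2 (by omega)
        rw [show 2 * i / 2 = i by omega, show Q + (2 * i - Q) / 2 = c + i by omega,
          show 2 * i % 2 = 0 by omega, show (2 * i - Q) % 2 = 0 by omega] at e
        revert e
        generalize f i = a
        generalize f (c + i) = b
        revert a b; decide)
    rw [hcc, h0, hc] at this
    simp at this
  · -- opposite parity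
    have := wal_odd ((2 * k : ℕ) : ℤ) f anti c W (by omega) (by push_cast; omega) (by omega)
      (by push_cast; omega) (by omega)
      (by
        intro i h1 h2 h3
        push_cast at h2
        have e := (H (2 * i) (by omega) (by omega) (by omega) (by omega)).1 (by omega)
        rw [show 2 * i / 2 = i by omega, show Q + (2 * i - Q) / 2 = c + i by omega,
          show 2 * i % 2 = 0 by omega, show (2 * i - Q) % 2 = 1 by omega] at e
        revert e
        generalize f i = a
        generalize f (c + i) = b
        revert a b; decide)
      (by
        intro i h1 h2 h3
        push_cast at h2
        have e := (H (2 * i + 1) (by omega) (by omega) (by omega) (by omega)).1 (by omega)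
        rw [show (2 * i + 1) / 2 = i by omega, show Q + (2 * i + 1 - Q) / 2 = c + 1 + i by omega,
          show (2 * i + 1) % 2 = 1 by omega, show (2 * i + 1 - Q) % 2 = 0 by omega] at e
        revert e
        generalize f i = a
        generalize f (c + 1 + i) = b
        revert a b; decide)
      (by
        intro i h1 h2 h3
        have e := (H (2 * i) (by omega) (by omega) (by omega) (by omega)).2 (by omega)
        rw [show 2 * i / 2 = i by omega, show Q + (2 * i - Q) / 2 = c + i by omega,
          show 2 * i % 2 = 0 by omega, show (2 * i - Q) % 2 = 1 by omega] at e
        revert e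
        generalize f i = a
        generalize f (c + i) = b
        revert a b; decide)
      (by
        intro i h1 h2 h3
        have e := (H (2 * i + 1) (by omega) (by omega) (by omega) (by omega)).2 (by omega)
        rw [show (2 * i + 1) / 2 = i by omega, show Q + (2 * i + 1 - Q) / 2 = c + 1 + i by omega,
          show (2 * i + 1) % 2 = 1 by omega, show (2 * i + 1 - Q) % 2 = 0 by omega] at e
        revert e
        generalize f i = a
        generalize f (c + 1 + i) = b
        revert a b; decide)
      (by
        rw [show Q / 2 = c by omega, show Q % 2 = 1 by omega] at apq
        simpa using apq)
      (by rw [← hc]; exact h0)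
    have hblock : ∃ e : Bool, ∀ i : ℤ, 0 ≤ i → i < 2 * k →
        extSig (2 * k) v (P + W + i) = e := by
      rcases this with ⟨h1, h2⟩ | ⟨h1, h2⟩
      · refine ⟨false, fun i hi1 hi2 => ?_⟩
        have e := anti i
        rw [h2 i hi1 (by push_cast; omega)] at e
        rw [add_assoc, hff, h1, add_comm ((2 * k : ℕ) : ℤ), e]
        rfl
      · refine ⟨true, fun i hi1 hi2 => ?_⟩
        rw [add_assoc, hff, h1]
        exact h2 _ (by omega) (by push_cast; omega)
    obtain ⟨e, he⟩ := hblock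
    refine ⟨_, _, ?_, agree_block k hk v (P + W) e he⟩
    have := wal_some_inj (2 * k) (P + W) (2 * k - 1) 0 (by push_cast; omega) (by push_cast; omega)
    rw [add_zero] at this
    rw [ne_eq, this]
    omega

/-- Lemma C: `0` and `m` agree outside `*`. -/
lemma agree_zero_m (k : ℕ) (hk : 2 ≤ k) (u : Fin (2 * k) → ZMod 2)
    (hu : ∀ i : ℤ, 0 ≤ i → i < k → extSig (2 * k) u (i + k) = !extSig (2 * k) u i) :
    Agree (warc (2 * k) u) (some ((0 : ℤ) : ZMod (2 * (2 * k))))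
      (some ((0 + 2 * k : ℤ) : ZMod (2 * (2 * k)))) none := by
  have hm : 1 ≤ 2 * k := by omega
  rw [agree_iff _ hm _ _ _ _ (by omega) (by push_cast; omega)]
  refine ⟨fun h => absurd rfl h, ?_⟩
  intro t h0 h1 h2 _
  push_cast at h1
  rw [zero_add, zero_add, show (t - 2 * (k : ℤ)) % 2 = t % 2 by omega]
  constructor
  · intro h3
    have e1 := hu (t / 2 - k) (by omega) (by omega)
    have e2 := extSig_anti (2 * k) hm u (t / 2 - k)
    rw [show t / 2 - (k : ℤ) + k = t / 2 by ring] at e1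
    rw [show 2 * (k : ℤ) + (t - 2 * k) / 2 = t / 2 - k + ((2 * k : ℕ) : ℤ) by push_cast; omega,
      e2, ← e1]
  · intro h3
    have e1 := hu (t / 2) (by omega) (by omega)
    rw [show 2 * (k : ℤ) + (t - 2 * k) / 2 = t / 2 + k by omega, e1]
    generalize extSig (2 * k) u (t / 2) = a
    generalize decide (t % 2 = 1) = b
    revert a b; decide

/-- Let `m = 2k` with `k ≥ 3`, and let `u` be a signature with
`u_{i+k} ≠ u_i` for all `0 ≤ i ≤ k−1`. Then the arc `a` of `W_u` between the
vertices `0` and `m` satisfies `d(a) = 1`; consequently every automorphism of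
`W_u` fixes `*`, and any isomorphism from `W_u` to another Walecki tournament
`W_v` maps `*` to `*`. -/
theorem walecki_stmt18 (k : ℕ) (hk : 3 ≤ k) (u : Fin (2 * k) → ZMod 2)
    (hu : ∀ i : ℕ, (hi : i ≤ k - 1) →
      u ⟨i + k, by omega⟩ ≠ u ⟨i, by omega⟩)
    (x y : WVert (2 * k))
    (hxy : (x = some 0 ∧ y = some ((2 * k : ℕ) : ZMod (2 * (2 * k)))) ∨
           (x = some ((2 * k : ℕ) : ZMod (2 * (2 * k))) ∧ y = some 0))
    (ha : warc (2 * k) u x y) :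
    dcount (warc (2 * k) u) x y = 1 ∧
    ∀ (v : Fin (2 * k) → ZMod 2) (φ : WVert (2 * k) → WVert (2 * k)),
      Function.Bijective φ →
      (∀ a b : WVert (2 * k), warc (2 * k) u a b ↔ warc (2 * k) v (φ a) (φ b)) →
      φ none = none := by
  have hm : 1 ≤ 2 * k := by omega
  have hu' : ∀ i : ℤ, 0 ≤ i → i < k → extSig (2 * k) u (i + k) = !extSig (2 * k) u i := by
    intro i h1 h2
    have h3 := hu i.toNat (by omega)
    have a1 := extSig_true (2 * k) u ⟨i.toNat + k, by omega⟩
    have a2 := extSig_true (2 * k) u ⟨i.toNat, by omega⟩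
    simp only [Nat.cast_add, Int.toNat_of_nonneg h1] at a1 a2
    rcases wal_z2 (u ⟨i.toNat, by omega⟩) with h | h
    · have h4 : u ⟨i.toNat + k, by omega⟩ = 1 := by
        rcases wal_z2 (u ⟨i.toNat + k, by omega⟩) with h' | h'
        · exact absurd (h'.trans h.symm) h3
        · exact h'
      have h5 : ¬ extSig (2 * k) u i = true := by rw [a2, h]; decide
      rw [a1.2 h4]
      simpa using h5
    · have h5 : ¬ extSig (2 * k) u (i + k) = true := by
        rw [a1]
        intro h'
        exact h3 (h'.trans h.symm)
      rw [a2.2 h]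
      simpa using h5
  have hag0 := agree_zero_m k (by omega) u hu'
  have c0 : ((0 : ℤ) : ZMod (2 * (2 * k))) = 0 := by simp
  have cm : ((0 + 2 * k : ℤ) : ZMod (2 * (2 * k))) = ((2 * k : ℕ) : ZMod (2 * (2 * k))) := by
    push_cast; ring
  have hne : (0 : ZMod (2 * (2 * k))) ≠ ((2 * k : ℕ) : ZMod (2 * (2 * k))) := by
    rw [← c0, ← cm]
    intro h
    have := wal_inj (2 * k) 0 0 (2 * k) (by simpa using h) (by push_cast; omega)
      (by push_cast; omega)
    omega
  have e0 := hu' 0 (by omega) (by omega)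
  have em := extSig_anti (2 * k) hm u 0
  rw [zero_add] at e0 em
  have n0 := warc_none_some (2 * k) hm u 0
  have s0 := warc_some_none (2 * k) hm u 0
  have nm := warc_none_some (2 * k) hm u (0 + 2 * k)
  have sm := warc_some_none (2 * k) hm u (0 + 2 * k)
  have r0 := warc_above (2 * k) hm u 0 0 (2 * k) (by omega) (by omega) (by push_cast; omega)
  have rm := warc_below (2 * k) hm u 0 (2 * k) 0 (by omega) (by omega) (by push_cast; omega)
  rw [show (0 : ℤ) + (0 + (2 * k - 0) / 2) = k by omega,
    show (2 * (k : ℤ) - 0) % 2 = 0 by omega, add_zero, e0, cm, c0] at r0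
  rw [show (0 : ℤ) + (2 * k + (0 - 2 * k) / 2) = k by omega,
    show (0 - 2 * (k : ℤ)) % 2 = 0 by omega, add_zero, e0, cm, c0] at rm
  rw [c0] at n0 s0
  rw [cm, zero_add, show (2 * (k : ℤ)) = ((2 * k : ℕ) : ℤ) by push_cast; ring, em] at nm sm
  rw [c0, cm] at hag0
  -- the twin structure of the arc
  have twin : x ≠ y ∧ x ≠ none ∧ y ≠ none ∧ warc (2 * k) u y none ∧ warc (2 * k) u none x ∧
      ¬ warc (2 * k) u x none ∧
      Agree (warc (2 * k) u) x y none := by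
    rcases hxy with ⟨rfl, rfl⟩ | ⟨rfl, rfl⟩
    · rw [r0] at ha
      refine ⟨by simpa using hne, by simp, by simp, ?_, ?_, ?_, hag0⟩
      · rw [sm]; simpa using ha
      · rw [n0]; simpa using ha
      · rw [s0]; simpa using ha
    · rw [rm] at ha
      refine ⟨by simpa using hne.symm, by simp, by simp, ?_, ?_, ?_, hag0.symm⟩
      · rw [s0]; simpa using ha
      · rw [nm]; simpa using ha
      · rw [sm]; simpa using ha
  obtain ⟨hxy', hx, hy, tyn, tnx, txn, hag⟩ := twin
  constructor
  · rw [dcount, Set.ncard_eq_one]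
    refine ⟨none, ?_⟩
    ext z
    simp only [Set.mem_setOf_eq, Set.mem_singleton_iff]
    constructor
    · rintro ⟨h1, h2, h3, h4⟩
      by_contra hz
      have h5 := (hag z h1 h2 hz).2 h3
      obtain ⟨x', rfl⟩ := Option.ne_none_iff_exists'.1 hx
      obtain ⟨z', rfl⟩ := Option.ne_none_iff_exists'.1 hz
      exact warc_asymm (2 * k) hm u x' z' (fun h => h1 (by rw [h])) h5 h4
    · rintro rfl
      exact ⟨hx.symm, hy.symm, tyn, tnx⟩
  · intro v φ hφ hiso
    have hagv : Agree (warc (2 * k) v) (φ x) (φ y) (φ none) := by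
      intro z h1 h2 h3
      obtain ⟨z, rfl⟩ := hφ.2 z
      rw [← hiso, ← hiso]
      exact hag z (fun h => h1 (by rw [h])) (fun h => h2 (by rw [h])) (fun h => h3 (by rw [h]))
    by_contra hn
    have hφx : φ x ≠ none := by
      intro h
      rw [h] at hagv
      exact not_agree_none k (by omega) v _ _ (by rw [← h]; exact fun h => hxy' (hφ.1 h).symm) hagv
    have hφy : φ y ≠ none := by
      intro h
      rw [h] at hagv
      exact not_agree_none k (by omega) v _ _ (by rw [← h]; exact fun h => hxy' (hφ.1 h)) hagv.symm
    obtain ⟨p, hp⟩ := Option.ne_none_iff_exists'.1 hφx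
    obtain ⟨q, hq⟩ := Option.ne_none_iff_exists'.1 hφy
    obtain ⟨w, hw⟩ := Option.ne_none_iff_exists'.1 hn
    rw [hiso, hp, hq] at ha
    rw [hiso, hq, hw] at tyn
    rw [hiso, hp, hw] at txn
    rw [hp, hq, hw] at hagv
    obtain ⟨b, c, hb, hbc⟩ := twin_exc k (by omega) v p q w
      (by rintro rfl; exact hxy' (hφ.1 (hp.trans hq.symm)))
      (by rintro rfl; exact hx (hφ.1 (hp.trans hw.symm)))
      (by rintro rfl; exact hy (hφ.1 (hq.trans hw.symm))) ha tyn txn hagv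
    obtain ⟨b, rfl⟩ := hφ.2 b
    obtain ⟨c, rfl⟩ := hφ.2 c
    rw [← hw] at hb hbc
    refine not_agree_none k (by omega) u b c (fun h => hb (by rw [h])) ?_
    intro z h1 h2 h3
    rw [hiso, hiso]
    exact hbc _ (fun h => h1 (hφ.1 h)) (fun h => h2 (hφ.1 h)) (fun h => h3 (hφ.1 h))
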